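/- Let q be an odd integer ≥ 3 with ω(q) = 1 (i.e., q is a prime power), and let r be the multiplicative order of 2 modulo q. If φ(q)/r is odd, then there are no semi-bad classes modulo q: E'(q) = ∅. -/

import Mathlib

/-!
Let `H` be the subgroup of `(ℤ/qℤ)ˣ` generated by `2`, so that `E(q)` is the image of `H`. Its index
is `φ(q)/r`, which is odd, say `2k + 1`. For any unit `x`, Lagrange's theorem in the quotient by `H`
gives `x ^ (2k + 1) ∈ H`; if also `x ^ 2 ∈ H`, then `x = x ^ (2k + 1) * ((x ^ 2) ^ k)⁻¹ ∈ H`.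
-/

/-- The set `E(q)` of bad classes: the powers `2^i`, `0 ≤ i ≤ r - 1`, in `ℤ/qℤ`,
where `r` is the multiplicative order of `2` modulo `q`. -/
def badE (q : ℕ) : Set (ZMod q) := {x | ∃ i < orderOf (2 : ZMod q), x = 2 ^ i}

/-- A class of `(ℤ/qℤ)*` is semi-bad if it does not belong to `E(q)` but its square does. -/
def SemiBad (q : ℕ) (x : ZMod q) : Prop := IsUnit x ∧ x ∉ badE q ∧ x ^ 2 ∈ badE q

/-- The set `E'(q)` of semi-bad classes. -/
def semiBadE (q : ℕ) : Set (ZMod q) := {x | SemiBad q x}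

/-- If `2` is the class of the unit `u`, the bad classes are the elements of the subgroup
generated by `u`. -/
lemma coe_mem_badE_iff {q : ℕ} [NeZero q] {u : (ZMod q)ˣ} (hu : (u : ZMod q) = 2)
    (x : (ZMod q)ˣ) : (x : ZMod q) ∈ badE q ↔ x ∈ Subgroup.zpowers u := by
  rw [← mem_powers_iff_mem_zpowers, mem_powers_iff_mem_range_orderOf, ← orderOf_units, hu]
  simp only [badE, Set.mem_ofPred_eq, Finset.mem_image, Finset.mem_range, Units.ext_iff,
    Units.val_pow_eq_pow_val, hu, eq_comm]

/-- In a commutative group, a subgroup of odd index contains every element whose square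
it contains. -/
lemma mem_of_sq_mem_of_odd_index {G : Type*} [CommGroup G] {H : Subgroup G} (hH : Odd H.index)
    {x : G} (hx : x ^ 2 ∈ H) : x ∈ H := by
  obtain ⟨k, hk⟩ := hH
  have h := H.pow_index_mem x
  rw [hk, pow_succ, pow_mul] at h
  exact (H.mul_mem_cancel_left (H.pow_mem hx k)).1 h

/-- If `q` is an odd prime power (`ω(q) = 1`) and `φ(q)/r` is odd, where `r` is the
multiplicative order of `2` modulo `q`, then there are no semi-bad classes: `E'(q) = ∅`. -/
theorem stmt7 (q : ℕ) (hq : 3 ≤ q) (hodd : Odd q)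
    (homega : q.primeFactors.card = 1)
    (hparity : Odd (q.totient / orderOf (2 : ZMod q))) :
    semiBadE q = ∅ := by
  have : NeZero q := ⟨by omega⟩
  obtain ⟨u, hu⟩ : ∃ u : (ZMod q)ˣ, (u : ZMod q) = 2 :=
    ⟨ZMod.unitOfCoprime 2 (Nat.coprime_two_left.2 hodd), by simp⟩
  have hindex : Odd (Subgroup.zpowers u).index := by
    have hcard := (Subgroup.zpowers u).card_mul_index
    rw [Nat.card_zpowers, Nat.card_eq_fintype_card, ZMod.card_units_eq_totient, ← orderOf_units,
      hu] at hcard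
    have hpos : 0 < orderOf (2 : ZMod q) := by
      rw [← hu, orderOf_units]
      exact orderOf_pos u
    rwa [← hcard, Nat.mul_div_cancel_left _ hpos] at hparity
  refine Set.eq_empty_of_forall_notMem ?_
  rintro _ ⟨⟨x, rfl⟩, hx, hx2⟩
  rw [← Units.val_pow_eq_pow_val, coe_mem_badE_iff hu] at hx2
  exact hx ((coe_mem_badE_iff hu x).2 (mem_of_sq_mem_of_odd_index hindex hx2))
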